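/- Let k be a field, A a finite-dimensional k-algebra, U a finitely generated A-module, π : P₀ → U a surjective A-module homomorphism with P₀ finitely generated projective, and V an A-module. For an A-module homomorphism φ : P₀ → V the following are equivalent: (a) φ = ψ ∘ π for some A-module homomorphism ψ : U → V that factors through a projective A-module; (b) φ is a finite sum of maps λ_{τ,v} where τ : P₀ → A is an A-module homomorphism vanishing on ker(π) and v is an element of V. -/

import Mathlib

/-!
Choosing a section of `A^(Q) → Q` for the projective module `Q`, a map `U → Q → V` becomes
`u ↦ ∑ q, f_q(u) • h(q)` with `f_q : U → A` the coordinate functionals. Since `U` is finitely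
generated, only finitely many `f_q` are nonzero (`exists_finset_support_subset`), and composing with
`π` gives (b). Conversely, each `τ` vanishing on `ker π` descends along the surjection `π` to
`U → A`, so a finite sum of `λ_{τ,v}` is `U → Aⁿ → V` precomposed with `π`.
-/

universe u v w

/-- An `A`-module homomorphism factors through a projective `A`-module. -/
def FactorsThroughProjective (A : Type u) [Ring A] {U : Type v} {V : Type w}
    [AddCommGroup U] [Module A U] [AddCommGroup V] [Module A V]
    (f : U →ₗ[A] V) : Prop :=
  ∃ (Q : Type (max u v w)) (_ : AddCommGroup Q) (_ : Module A Q),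
    Module.Projective A Q ∧ ∃ (g : U →ₗ[A] Q) (h : Q →ₗ[A] V), h.comp g = f

/-- The map `λ_{τ,v} : P → V`, `x ↦ τ(x) • v`. -/
def lambdaMap {A : Type u} [Ring A] {P : Type v} {V : Type w}
    [AddCommGroup P] [Module A P] [AddCommGroup V] [Module A V]
    (τ : P →ₗ[A] A) (v : V) : P →ₗ[A] V where
  toFun x := τ x • v
  map_add' x y := by simp [add_smul]
  map_smul' a x := by simp [mul_smul]

/-- A homomorphism from a finitely generated module to a free module has values supported
in a common finite set of coordinates. -/
theorem exists_finset_support_subset {A U Q : Type*} [Ring A] [AddCommGroup U] [Module A U]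
    [Module.Finite A U] (f : U →ₗ[A] (Q →₀ A)) :
    ∃ S : Finset Q, ∀ u, (f u).support ⊆ S := by
  classical
  obtain ⟨t, ht⟩ := Module.Finite.fg_top (R := A) (M := U)
  refine ⟨t.biUnion fun u => (f u).support, fun u => ?_⟩
  have hle : Submodule.span A (t : Set U) ≤
      (Finsupp.supported A A (↑(t.biUnion fun u => (f u).support) : Set Q)).comap f := by
    rw [Submodule.span_le]
    intro x hx
    simp only [SetLike.mem_coe, Submodule.mem_comap, Finsupp.mem_supported, Finset.coe_subset]
    exact Finset.subset_biUnion_of_mem (fun u => (f u).support) hx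
  rw [ht] at hle
  have hu := hle (Submodule.mem_top (x := u))
  simpa only [Submodule.mem_comap, Finsupp.mem_supported, Finset.coe_subset] using hu

/-- A finite sum of maps `λ_{σ,v}` factors through the free module `ι → A`, lifted to the
universe in which `FactorsThroughProjective` asks for the projective module. -/
theorem factorsThroughProjective_sum_lambdaMap {A : Type u} [Ring A] {U : Type v} {V : Type w}
    [AddCommGroup U] [Module A U] [AddCommGroup V] [Module A V]
    {ι : Type} [Fintype ι] (σ : ι → (U →ₗ[A] A)) (x : ι → V) :
    FactorsThroughProjective A (∑ i, lambdaMap (σ i) (x i)) := by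
  classical
  refine ⟨ULift.{max v w, u} (ι → A), inferInstance, inferInstance,
    Module.Projective.of_equiv ULift.moduleEquiv.symm,
    ULift.moduleEquiv.symm.toLinearMap.comp (LinearMap.pi σ),
    (∑ i, lambdaMap (LinearMap.proj i) (x i)).comp ULift.moduleEquiv.toLinearMap, ?_⟩
  ext u
  simp [lambdaMap]

/-- Let `π : P₀ → U` be surjective with `P₀` finitely generated projective and
`U` finitely generated.  For `φ : P₀ → V` the following are equivalent: (a) `φ = ψ ∘ π`
for some `ψ : U → V` factoring through a projective module; (b) `φ` is a finite sum of
maps `λ_{τ,v}` with `τ : P₀ → A` vanishing on `ker π`. -/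
theorem factorisation_through_pi_iff_sum_lambda_vanishing
    (k : Type*) [Field k] (A : Type*) [Ring A] [Algebra k A] [FiniteDimensional k A]
    (U V : Type*) [AddCommGroup U] [Module A U] [Module.Finite A U]
    [AddCommGroup V] [Module A V]
    (P₀ : Type*) [AddCommGroup P₀] [Module A P₀]
    [Module.Finite A P₀] [Module.Projective A P₀]
    (π : P₀ →ₗ[A] U) (hπ : Function.Surjective π)
    (φ : P₀ →ₗ[A] V) :
    (∃ ψ : U →ₗ[A] V, FactorsThroughProjective A ψ ∧ φ = ψ.comp π) ↔
    (∃ (ι : Type) (_ : Fintype ι) (τ : ι → (P₀ →ₗ[A] A)) (v : ι → V),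
      (∀ i, ∀ x ∈ LinearMap.ker π, τ i x = 0) ∧
      φ = ∑ i, lambdaMap (τ i) (v i)) := by
  classical
  constructor
  · rintro ⟨ψ, ⟨Q, _, _, hQ, g, h, rfl⟩, rfl⟩
    obtain ⟨s, hs⟩ := Module.projective_def'.mp hQ
    obtain ⟨S, hS⟩ := exists_finset_support_subset (s.comp g)
    -- The index type has to live in `Type`, so `S` is enumerated by `Fin S.card`.
    refine ⟨Fin S.card, inferInstance,
      fun i => (Finsupp.lapply (S.equivFin.symm i : Q)).comp (s.comp (g.comp π)),
      fun i => h (S.equivFin.symm i : Q), ?_, ?_⟩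
    · intro i x hx
      simp [LinearMap.mem_ker.mp hx]
    · ext x
      have hg : g (π x) = ∑ q ∈ S, s (g (π x)) q • q := by
        have h1 := LinearMap.congr_fun hs (g (π x))
        rw [LinearMap.comp_apply, Finsupp.linearCombination_apply, LinearMap.id_apply,
          Finsupp.sum_of_support_subset (s (g (π x))) (hS (π x)) (fun q a => a • id q)
            (fun q _ => zero_smul A _)] at h1
        exact h1.symm
      have hsum : ∑ i, s (g (π x)) (S.equivFin.symm i : Q) • h (S.equivFin.symm i : Q)
          = ∑ q ∈ S, s (g (π x)) q • h q := by
        rw [Equiv.sum_comp S.equivFin.symm (fun q : S => s (g (π x)) (q : Q) • h (q : Q))]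
        exact Finset.sum_coe_sort S (fun q => s (g (π x)) q • h q)
      simp only [LinearMap.comp_apply, LinearMap.sum_apply, lambdaMap, LinearMap.coe_mk,
        AddHom.coe_mk, Finsupp.lapply_apply]
      rw [hsum]
      conv_lhs => rw [hg]
      simp only [map_sum, map_smul]
  · rintro ⟨ι, _, τ, v, hτ, rfl⟩
    -- `σ i : U → A` is the descent of `τ i` along `P₀ / ker π ≃ U`.
    let σ : ι → (U →ₗ[A] A) := fun i =>
      ((LinearMap.ker π).liftQ (τ i) (fun x hx => hτ i x hx)).comp
        (π.quotKerEquivOfSurjective hπ).symm.toLinearMap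
    have hσ : ∀ i x, σ i (π x) = τ i x := by
      intro i x
      have hx : (π.quotKerEquivOfSurjective hπ).symm (π x) = (LinearMap.ker π).mkQ x := by
        rw [LinearEquiv.symm_apply_eq]
        rfl
      simp only [σ, LinearMap.comp_apply, LinearEquiv.coe_coe, hx]
      exact Submodule.liftQ_apply _ _ _
    refine ⟨∑ i, lambdaMap (σ i) (v i), factorsThroughProjective_sum_lambdaMap σ v, ?_⟩
    ext x
    simp [lambdaMap, hσ]
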